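/- For the group G = (ℤ/3ℤ) × (ℤ/21ℤ) of order 63, there exists a (G, 8; 1)-difference matrix; that is, an 8 × 63 matrix D with entries in G such that for any two distinct rows i ≠ j, the 63 differences (D i k)⁻¹ · (D j k) are pairwise distinct. In particular there exist 7 mutually orthogonal Latin squares of order 63 arising from a difference matrix. -/

import Mathlib

/-!
If `f, f' : Fin n → G` are such that `c ↦ (f c)⁻¹ * f' c` is injective, then the squares
`(g, c) ↦ g * f c` and `(g, c) ↦ g * f' c` are orthogonal: the two entries in cell `(g, c)` have
quotient `(f c)⁻¹ * f' c`, which determines `c` and then `g`. Dividing the rows of a difference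
matrix by its first row therefore turns the remaining rows into mutually orthogonal Latin squares.

The difference matrix over `ℤ/3 × ℤ/21` is highly symmetric: its set of columns is invariant under
negation, under adding a fixed column of elements of order dividing `3`, and under an automorphism
of order `3` of the group combined with a permutation of the rows. Five columns generate all `63`
under these symmetries, and the difference property is a finite computation.
-/

/-- A Latin square of order `n`: every row map and every column map is a bijection. -/
def IsLatinSquare {n : ℕ} (L : Fin n → Fin n → Fin n) : Prop :=
  (∀ i, Function.Bijective fun j => L i j) ∧ (∀ j, Function.Bijective fun i => L i j)

/-- Two squares are orthogonal if the superposition map is injective. -/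
def IsOrthogonal {n : ℕ} (L₁ L₂ : Fin n → Fin n → Fin n) : Prop :=
  Function.Injective fun p : Fin n × Fin n => (L₁ p.1 p.2, L₂ p.1 p.2)

section DifferenceMatrix

variable {G ι κ : Type*} [Group G] {n : ℕ}

/-- A difference matrix with rows `ι` and columns `κ`: the quotients of any two distinct rows have
no repetition. When `κ` has as many elements as `G`, this is a `(G, |ι|; 1)`-difference matrix. -/
def IsDifferenceMatrix (D : ι → κ → G) : Prop :=
  ∀ i j, i ≠ j → Function.Injective fun k => (D i k)⁻¹ * D j k

theorem isDifferenceMatrix_of_lt [LinearOrder ι] {D : ι → κ → G}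
    (h : ∀ i j, i < j → Function.Injective fun k => (D i k)⁻¹ * D j k) :
    IsDifferenceMatrix D := by
  intro i j hij
  rcases hij.lt_or_gt with hlt | hgt
  · exact h i j hlt
  · simpa only [Function.comp_def, mul_inv_rev, inv_inv] using inv_injective.comp (h j i hgt)

/-- The square over `G` with entry `g * f c` in row `g` and column `c`, where rows and symbols are
numbered by `e` so that it becomes a square of order `n`. -/
def translationSquare (e : G ≃ Fin n) (f : Fin n → G) (r c : Fin n) : Fin n :=
  e (e.symm r * f c)

theorem isLatinSquare_translationSquare (e : G ≃ Fin n) {f : Fin n → G}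
    (hf : Function.Injective f) : IsLatinSquare (translationSquare e f) := by
  refine ⟨fun r => Finite.injective_iff_bijective.1 ?_, fun c => ?_⟩
  · exact e.injective.comp ((mul_right_injective (e.symm r)).comp hf)
  · exact e.bijective.comp ((Group.mulRight_bijective (f c)).comp e.symm.bijective)

theorem isOrthogonal_translationSquare (e : G ≃ Fin n) {f f' : Fin n → G}
    (h : Function.Injective fun c => (f c)⁻¹ * f' c) :
    IsOrthogonal (translationSquare e f) (translationSquare e f') := by
  rintro ⟨r, c⟩ ⟨r', c'⟩ hrc
  obtain ⟨hf, hf'⟩ : e.symm r * f c = e.symm r' * f c' ∧ e.symm r * f' c = e.symm r' * f' c' := by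
    simpa only [translationSquare, Prod.mk.injEq, e.apply_eq_iff_eq] using hrc
  obtain rfl : c = c' := h <| calc
    (f c)⁻¹ * f' c = (e.symm r * f c)⁻¹ * (e.symm r * f' c) := by group
    _ = (e.symm r' * f c')⁻¹ * (e.symm r' * f' c') := by rw [hf, hf']
    _ = (f c')⁻¹ * f' c' := by group
  obtain rfl : r = r' := e.symm.injective (mul_right_cancel hf)
  rfl

theorem IsDifferenceMatrix.inv_mul_row {D : ι → κ → G} (hD : IsDifferenceMatrix D) (i₀ : ι) :
    IsDifferenceMatrix fun i k => (D i₀ k)⁻¹ * D i k := by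
  simpa only [IsDifferenceMatrix, mul_inv_rev, inv_inv, mul_assoc, mul_inv_cancel_left] using hD

theorem IsDifferenceMatrix.exists_mols {m : ℕ} {D : Fin (m + 1) → Fin n → G}
    (hD : IsDifferenceMatrix D) (e : G ≃ Fin n) :
    ∃ L : Fin m → (Fin n → Fin n → Fin n),
      (∀ k, IsLatinSquare (L k)) ∧ (∀ k k', k ≠ k' → IsOrthogonal (L k) (L k')) := by
  refine ⟨fun k => translationSquare e fun c => (D 0 c)⁻¹ * D k.succ c, fun k => ?_,
    fun k k' hk => ?_⟩
  · exact isLatinSquare_translationSquare e (hD 0 k.succ k.succ_ne_zero.symm)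
  · exact isOrthogonal_translationSquare e
      (hD.inv_mul_row 0 k.succ k'.succ ((Fin.succ_injective m).ne hk))

end DifferenceMatrix

section Construction

/-- A column of an `8`-rowed matrix over `ℤ/3 × ℤ/21`. -/
abbrev Column : Type := Fin 8 → ZMod 3 × ZMod 21

/-- The symmetry of order `3` of the difference matrix: the group automorphism
`(x, z) ↦ (x + z, 16 z)` is applied to the entries while the rows `2, 3, 4` and `5, 6, 7` are
permuted cyclically. -/
def twist (c : Column) : Column := fun i =>
  let g := c (![0, 1, 3, 4, 2, 6, 7, 5] i)
  (g.1 + g.2.cast, 16 * g.2)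

/-- The column whose multiples may be added to every column of the difference matrix. -/
def period : Column :=
  ![(0, 0), (1, 0), (2, 7), (1, 7), (0, 7), (2, 14), (0, 14), (1, 14)]

/-- A column that `twist` fixes up to a multiple of `period`. -/
def fixedColumn : Column :=
  ![(0, 0), (0, 7), (1, 10), (1, 5), (2, 6), (1, 11), (2, 16), (2, 15)]

/-- Representatives of the remaining columns modulo negation, `twist` and `period`. -/
def seedColumns : List Column :=
  [![(0, 0), (0, 1), (0, 9), (1, 18), (2, 4), (1, 10), (1, 11), (1, 3)],
   ![(0, 0), (0, 2), (0, 5), (1, 2), (0, 13), (2, 7), (0, 11), (2, 9)],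
   ![(0, 0), (0, 3), (1, 0), (0, 4), (0, 12), (2, 2), (1, 8), (0, 20)]]

/-- Representatives of the columns of the difference matrix modulo multiples of `period`. -/
def baseColumns : List Column :=
  [0, fixedColumn, -fixedColumn] ++ seedColumns.flatMap fun c =>
    [c, twist c, twist (twist c), -c, -twist c, -twist (twist c)]

/-- The `8 × 63` difference matrix: columns `3 b`, `3 b + 1` and `3 b + 2` are the `b`-th base
column with `0`, `1` and `2` times `period` added to it. -/
def diffMatrix (i : Fin 8) (k : Fin 63) : Multiplicative (ZMod 3 × ZMod 21) :=
  .ofAdd (baseColumns.getD (k / 3) 0 i + (k % 3 : ℕ) • period i)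

theorem isDifferenceMatrix_diffMatrix : IsDifferenceMatrix diffMatrix := by
  apply isDifferenceMatrix_of_lt
  decide +kernel

end Construction

/-- For the group `G = ℤ/3 × ℤ/21` of order `63` there exists a `(G, 8; 1)`-difference
matrix (an `8 × 63` matrix over `G` in which, for any two distinct rows, the `63`
columnwise differences are pairwise distinct); in particular there exist `7`
mutually orthogonal Latin squares of order `63`. -/
theorem diffMatrix_Z3xZ21_and_7MOLS_63 :
    (∃ D : Fin 8 → Fin 63 → Multiplicative (ZMod 3 × ZMod 21),
      ∀ i j : Fin 8, i ≠ j →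
        Function.Injective fun k : Fin 63 => (D i k)⁻¹ * D j k) ∧
    (∃ L : Fin 7 → (Fin 63 → Fin 63 → Fin 63),
      (∀ k, IsLatinSquare (L k)) ∧
      (∀ k k', k ≠ k' → IsOrthogonal (L k) (L k'))) := by
  refine ⟨⟨diffMatrix, isDifferenceMatrix_diffMatrix⟩, ?_⟩
  exact isDifferenceMatrix_diffMatrix.exists_mols (Fintype.equivFinOfCardEq rfl)
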